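/- Let G be a graph with n vertices. For every S ⊆ V(G), the tree T_S obtained from T(G) by applying, at each cut 'v ≤ 0' with v ∉ S, the raising operation keeping the child that continues the path (so that exactly the cuts 'v ≤ 0' for v ∈ S together with the cut 'd* ≤ 0' remain) misclassifies precisely the blue edge examples corresponding to the edges of G having no endpoint in S and classifies all other examples correctly; in particular, the number of errors of T_S on E(G) equals the number of edges of G not covered by S. -/

import Mathlib

/-- The two class labels. -/
inductive Label where
  | blue
  | red
deriving DecidableEq

/-- A decision tree over examples `ι → ℝ` with classes `{blue, red}`:
every inner node carries a feature and a threshold, every leaf a class label.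
An example goes to the left child if its value in the node's feature is at most
the threshold, and to the right child otherwise. -/
inductive DTree (ι : Type) where
  | leaf (c : Label)
  | node (feat : ι) (thr : ℝ) (left right : DTree ι)

namespace DTree

variable {ι : Type}

/-- The class that a decision tree assigns to an example. -/
noncomputable def classify : DTree ι → (ι → ℝ) → Label
  | .leaf c, _ => c
  | .node f t l r, e => if e f ≤ t then l.classify e else r.classify e

/-- The routing path of an example (`false` = left child, `true` = right child);
it is the position of the leaf of the example. -/
noncomputable def route : DTree ι → (ι → ℝ) → List Bool
  | .leaf _, _ => []
  | .node f t l r, e => if e f ≤ t then false :: l.route e else true :: r.route e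

/-- The subtree rooted at a position (`none` if the position is not a node). -/
def subtreeAt : DTree ι → List Bool → Option (DTree ι)
  | T, [] => some T
  | .leaf _, _ :: _ => none
  | .node _ _ l r, b :: p => (if b then r else l).subtreeAt p

/-- Replace the subtree at a given position by another tree. -/
def replaceAt : DTree ι → List Bool → DTree ι → DTree ι
  | _, [], T' => T'
  | .leaf c, _ :: _, _ => .leaf c
  | .node f t l r, b :: p, T' =>
      if b then .node f t l (r.replaceAt p T') else .node f t (l.replaceAt p T') r

/-- The number of inner nodes of a decision tree. -/
def innerCount : DTree ι → ℕ
  | .leaf _ => 0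
  | .node _ _ l r => 1 + l.innerCount + r.innerCount

/-- The position `p` is an inner node of `T`. -/
def IsInnerPos (T : DTree ι) (p : List Bool) : Prop :=
  ∃ f t l r, T.subtreeAt p = some (.node f t l r)

/-- The position `p` is a node of `T`. -/
def IsNodePos (T : DTree ι) (p : List Bool) : Prop :=
  (T.subtreeAt p).isSome

/-- The feature and threshold of the inner node at position `p`. -/
def cutAt (T : DTree ι) (p : List Bool) : Option (ι × ℝ) :=
  match T.subtreeAt p with
  | some (.node f t _ _) => some (f, t)
  | _ => none

/-- The subtree raising operation at position `q` keeping the child in direction `b`: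
the subtree rooted at `q` is replaced by the subtree rooted at its `b`-child; it prunes
the node at `q` together with all inner nodes of the subtree rooted at the other child. -/
def raiseAt (T : DTree ι) (q : List Bool) (b : Bool) : DTree ι :=
  match T.subtreeAt q with
  | some (.node _ _ l r) => T.replaceAt q (if b then r else l)
  | _ => T

end DTree

/-- `E[T,p]`: the examples of `E` whose routing through `T` passes the position `p`. -/
noncomputable def reach {ι : Type} (E : Finset (ι → ℝ)) (T : DTree ι) (p : List Bool) :
    Finset (ι → ℝ) :=
  E.filter fun e => p <+: T.route e

/-- The number of errors of `T` on the training set `(E, lab)`. -/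
noncomputable def errCount {ι : Type} (T : DTree ι) (E : Finset (ι → ℝ))
    (lab : (ι → ℝ) → Label) : ℕ :=
  (E.filter fun e => T.classify e ≠ lab e).card

/-- A most frequent label of the labeled set `(E, lab)` (blue in case of a tie). -/
def majorityLabel {ι : Type} (E : Finset (ι → ℝ)) (lab : (ι → ℝ) → Label) : Label :=
  if (E.filter fun e => lab e = Label.red).card ≤ (E.filter fun e => lab e = Label.blue).card
  then Label.blue else Label.red

/-- One subtree replacement operation: some inner node of `T` is replaced by a leaf
labeled with a most frequent label of the examples reaching it. -/
def ReplStep {ι : Type} (E : Finset (ι → ℝ)) (lab : (ι → ℝ) → Label)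
    (T T' : DTree ι) : Prop :=
  ∃ p, T.IsInnerPos p ∧
    T' = T.replaceAt p (.leaf (majorityLabel (reach E T p) lab))

/-- `T` is a reasonable decision tree for `(E, lab)`: every node is reached by some
example and every leaf carries a most frequent label of the examples reaching it. -/
def Reasonable {ι : Type} (E : Finset (ι → ℝ)) (lab : (ι → ℝ) → Label)
    (T : DTree ι) : Prop :=
  (∀ p, T.IsNodePos p → (reach E T p).Nonempty) ∧
  (∀ p c, T.subtreeAt p = some (.leaf c) → ∀ c' : Label,
    ((reach E T p).filter fun e => lab e = c').card ≤
      ((reach E T p).filter fun e => lab e = c).card)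

/-- Apply a sequence of raising operations (given by positions and kept directions). -/
def applySeq {ι : Type} : DTree ι → List (List Bool × Bool) → DTree ι
  | T, [] => T
  | T, (q, b) :: rest => applySeq (T.raiseAt q b) rest

/-- Each raising operation of the sequence is applied at an inner node. -/
def ValidSeq {ι : Type} : DTree ι → List (List Bool × Bool) → Prop
  | _, [] => True
  | T, (q, b) :: rest => T.IsInnerPos q ∧ ValidSeq (T.raiseAt q b) rest

/-- The total number of inner nodes pruned by a sequence of raising operations. -/
def seqPruned {ι : Type} : DTree ι → List (List Bool × Bool) → ℕ
  | _, [] => 0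
  | T, (q, b) :: rest =>
      (match T.subtreeAt q with
        | some (.node _ _ l r) => 1 + DTree.innerCount (if b then l else r)
        | _ => 0) + seqPruned (T.raiseAt q b) rest

/-- `T'` is obtained from `T` by a (possibly empty) sequence of subtree raising
operations. -/
def RaisedFrom {ι : Type} (T T' : DTree ι) : Prop :=
  ∃ steps, ValidSeq T steps ∧ applySeq T steps = T'

/-- `T'` is obtained from `T` by a sequence of subtree raising operations pruning
exactly `m` inner nodes in total. -/
def RaisedFromPruning {ι : Type} (T : DTree ι) (m : ℕ) (T' : DTree ι) : Prop :=
  ∃ steps, ValidSeq T steps ∧ seqPruned T steps = m ∧ applySeq T steps = T'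

/-- Tracking the position of a node through one raising operation: nodes strictly
below the raised node on the discarded side, and the raised node itself, are pruned
(`none`); all other nodes survive at a possibly shifted position. -/
def stepMap (q : List Bool) (b : Bool) (p : List Bool) : Option (List Bool) :=
  if q <+: p then
    if q ++ [b] <+: p then some (q ++ p.drop (q.length + 1)) else none
  else some p

/-- Tracking the position of a node through a sequence of raising operations. -/
def seqMap : List (List Bool × Bool) → List Bool → Option (List Bool)
  | [], p => some p
  | (q, b) :: rest, p => (stepMap q b p).bind (seqMap rest)

/-- The number of errors of `T` on a multiset of labeled examples. -/
noncomputable def errCountM {ι : Type} (T : DTree ι) (E : Multiset ((ι → ℝ) × Label)) : ℕ :=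
  (E.filter fun q => T.classify q.1 ≠ q.2).card

/-- The 0/1 indicator vector of a set of coordinates. -/
def indVec {m : ℕ} (S : Finset (Fin m)) : Fin m → ℝ := fun i => if i ∈ S then 1 else 0

/-- The blue edge example of an edge `{v, w}`: value `1` exactly in the
coordinates `v` and `w`. -/
def edgeEx (n : ℕ) : Sym2 (Fin n) → (Fin (n + 1) → ℝ) :=
  Sym2.lift ⟨fun v w => indVec {v.castSucc, w.castSucc},
    fun v w => by simp only []; rw [Finset.pair_comm]⟩

/-- The blue vertex example of a vertex `v`: value `1` exactly in the coordinates
`v` and `d*` (the last coordinate). -/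
def vertEx (n : ℕ) (v : Fin n) : Fin (n + 1) → ℝ := indVec {v.castSucc, Fin.last n}

/-- The blue example with value `1` only in the coordinate `d*`. -/
def starEx (n : ℕ) : Fin (n + 1) → ℝ := indVec {Fin.last n}

/-- The labeling: the all-zero example is red, all other examples are blue. -/
noncomputable def labG (n : ℕ) : (Fin (n + 1) → ℝ) → Label :=
  fun e => if e = (fun _ => 0) then Label.red else Label.blue

/-- The training set `E(G)` of the independent-set construction. -/
noncomputable def EG {n : ℕ} (G : SimpleGraph (Fin n)) [DecidableRel G.Adj] :
    Finset (Fin (n + 1) → ℝ) :=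
  (G.edgeFinset.image (edgeEx n)) ∪ (Finset.univ.image (vertEx n)) ∪
    {starEx n, fun _ => 0}

/-- A descending path of cuts `f ≤ 0` (for `f` in the given list) whose right
children are blue leaves and whose left children continue the path, ending in the
given tree. -/
def chainB {m : ℕ} (fs : List (Fin m)) (tail : DTree (Fin m)) : DTree (Fin m) :=
  fs.foldr (fun f acc => DTree.node f 0 acc (.leaf .blue)) tail

/-- The decision tree `T(G)`: the path of cuts `v₁ ≤ 0, …, vₙ ≤ 0, d* ≤ 0`; at each
vertex cut the right child is a blue leaf; the final cut has a red left child and a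
blue right child. -/
def TG (n : ℕ) : DTree (Fin (n + 1)) :=
  chainB (List.ofFn fun i : Fin n => i.castSucc)
    (DTree.node (Fin.last n) 0 (.leaf .red) (.leaf .blue))

/-- The tree obtained from `T(G)` by applying, at each cut `v ≤ 0` with `v ∈ R`,
the raising operation keeping the child that continues the path: the path of the
cuts `v ≤ 0` for `v ∉ R` followed by the cut `d* ≤ 0`. -/
def TGkeep (n : ℕ) (R : Finset (Fin n)) : DTree (Fin (n + 1)) :=
  chainB (((List.ofFn fun i : Fin n => i).filter fun v => decide (v ∉ R)).map Fin.castSucc)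
    (DTree.node (Fin.last n) 0 (.leaf .red) (.leaf .blue))

/-- The tree obtained from `T(G)` by applying, at each cut `v ≤ 0` with `v ∉ S`,
the raising operation keeping the child that continues the path, so that exactly
the cuts `v ≤ 0` for `v ∈ S` together with the cut `d* ≤ 0` remain. -/
def TGsel (n : ℕ) (S : Finset (Fin n)) : DTree (Fin (n + 1)) :=
  chainB (((List.ofFn fun i : Fin n => i).filter fun v => decide (v ∈ S)).map Fin.castSucc)
    (DTree.node (Fin.last n) 0 (.leaf .red) (.leaf .blue))

theorem classify_chainB {m : ℕ} (fs : List (Fin m)) (T : DTree (Fin m)) (e : Fin m → ℝ) :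
    (chainB fs T).classify e = if ∀ f ∈ fs, e f ≤ 0 then T.classify e else Label.blue := by
  induction fs with
  | nil => simp [chainB]
  | cons f fs ih =>
    have h : (chainB (f :: fs) T).classify e =
        if e f ≤ 0 then (chainB fs T).classify e else Label.blue := rfl
    rw [h, ih]
    by_cases hf : e f ≤ 0 <;> simp [hf]

theorem classify_TGsel (n : ℕ) (S : Finset (Fin n)) (e : Fin (n + 1) → ℝ) :
    (TGsel n S).classify e =
      if (∀ v ∈ S, e v.castSucc ≤ 0) ∧ e (Fin.last n) ≤ 0 then Label.red else Label.blue := by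
  rw [TGsel, classify_chainB]
  have h : (∀ f ∈ ((List.ofFn fun i : Fin n => i).filter fun v => decide (v ∈ S)).map
      Fin.castSucc, e f ≤ 0) ↔ ∀ v ∈ S, e v.castSucc ≤ 0 := by
    simp [List.mem_ofFn]
  simp only [h, DTree.classify, ite_and]

theorem edgeEx_castSucc (n : ℕ) (s : Sym2 (Fin n)) (v : Fin n) :
    edgeEx n s v.castSucc = if v ∈ s then 1 else 0 := by
  induction s with
  | _ a b => simp [edgeEx, indVec]

theorem edgeEx_last (n : ℕ) (s : Sym2 (Fin n)) : edgeEx n s (Fin.last n) = 0 := by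
  induction s with
  | _ a b => simp [edgeEx, indVec, (Fin.castSucc_ne_last _).symm]

theorem vertEx_last (n : ℕ) (v : Fin n) : vertEx n v (Fin.last n) = 1 := by
  simp [vertEx, indVec]

theorem starEx_last (n : ℕ) : starEx n (Fin.last n) = 1 := by
  simp [starEx, indVec]

theorem edgeEx_injective (n : ℕ) : Function.Injective (edgeEx n) := by
  intro s t h
  refine Sym2.ext fun v => ?_
  have hv := congrFun h v.castSucc
  rw [edgeEx_castSucc, edgeEx_castSucc] at hv
  by_cases hs : v ∈ s <;> by_cases ht : v ∈ t <;> simp_all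

theorem labG_edgeEx (n : ℕ) (s : Sym2 (Fin n)) : labG n (edgeEx n s) = Label.blue := by
  refine if_neg fun h => ?_
  have hv := congrFun h s.out.1.castSucc
  simp [edgeEx_castSucc, Sym2.out_fst_mem] at hv

theorem classify_TGsel_edgeEx_ne_labG_iff (n : ℕ) (S : Finset (Fin n)) (s : Sym2 (Fin n)) :
    (TGsel n S).classify (edgeEx n s) ≠ labG n (edgeEx n s) ↔ ∀ v ∈ s, v ∉ S := by
  rw [labG_edgeEx, classify_TGsel]
  simp only [edgeEx_castSucc, edgeEx_last, le_refl, and_true]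
  have h : (∀ v ∈ S, (if v ∈ s then (1 : ℝ) else 0) ≤ 0) ↔ ∀ v ∈ s, v ∉ S := by
    refine forall_congr' fun v => ?_
    by_cases hv : v ∈ s <;> simp [hv, not_le.2 (zero_lt_one (α := ℝ))]
  simp [h]

theorem classify_TGsel_eq_labG_of_last_eq_one (n : ℕ) (S : Finset (Fin n))
    (e : Fin (n + 1) → ℝ) (he : e (Fin.last n) = 1) :
    (TGsel n S).classify e = labG n e := by
  have h0 : e ≠ fun _ => 0 := fun h => by simp [h] at he
  simp [classify_TGsel, labG, h0, he]

theorem classify_TGsel_zero (n : ℕ) (S : Finset (Fin n)) :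
    (TGsel n S).classify (fun _ => 0) = labG n (fun _ => 0) := by
  simp [classify_TGsel, labG]

theorem classify_TGsel_ne_labG_iff {n : ℕ} (G : SimpleGraph (Fin n)) [DecidableRel G.Adj]
    (S : Finset (Fin n)) (e : Fin (n + 1) → ℝ) (he : e ∈ EG G) :
    (TGsel n S).classify e ≠ labG n e ↔
      ∃ s ∈ G.edgeFinset, (∀ v : Fin n, v ∈ s → v ∉ S) ∧ e = edgeEx n s := by
  constructor
  · intro hne
    simp only [EG, Finset.mem_union, Finset.mem_image, Finset.mem_univ, true_and,
      Finset.mem_insert, Finset.mem_singleton] at he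
    rcases he with (⟨s, hs, rfl⟩ | ⟨v, rfl⟩) | rfl | rfl
    · exact ⟨s, hs, (classify_TGsel_edgeEx_ne_labG_iff n S s).1 hne, rfl⟩
    · exact absurd (classify_TGsel_eq_labG_of_last_eq_one n S _ (vertEx_last n v)) hne
    · exact absurd (classify_TGsel_eq_labG_of_last_eq_one n S _ (starEx_last n)) hne
    · exact absurd (classify_TGsel_zero n S) hne
  · rintro ⟨s, -, hS, rfl⟩
    exact (classify_TGsel_edgeEx_ne_labG_iff n S s).2 hS

/-- For every `S ⊆ V(G)`, the tree `T_S` (obtained from `T(G)` by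
raising away the cuts of the vertices outside `S`) misclassifies precisely the blue
edge examples of the edges of `G` having no endpoint in `S` and classifies all
other examples of `E(G)` correctly; in particular its number of errors on `E(G)`
equals the number of edges of `G` not covered by `S`. -/
theorem stmt9 {n : ℕ} (G : SimpleGraph (Fin n)) [DecidableRel G.Adj]
    (S : Finset (Fin n)) :
    (∀ e ∈ EG G, ((TGsel n S).classify e ≠ labG n e ↔
        ∃ s ∈ G.edgeFinset, (∀ v : Fin n, v ∈ s → v ∉ S) ∧ e = edgeEx n s))
    ∧ errCount (TGsel n S) (EG G) (labG n)
        = (G.edgeFinset.filter fun s => ∀ v : Fin n, v ∈ s → v ∉ S).card := by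
  refine ⟨classify_TGsel_ne_labG_iff G S, ?_⟩
  rw [errCount, ← Finset.card_image_of_injective _ (edgeEx_injective n)]
  congr 1
  ext e
  simp only [Finset.mem_filter, Finset.mem_image]
  constructor
  · rintro ⟨he, hne⟩
    obtain ⟨s, hs, hS, rfl⟩ := (classify_TGsel_ne_labG_iff G S e he).1 hne
    exact ⟨s, ⟨hs, hS⟩, rfl⟩
  · rintro ⟨s, ⟨hs, hS⟩, rfl⟩
    refine ⟨?_, (classify_TGsel_edgeEx_ne_labG_iff n S s).2 hS⟩
    exact Finset.mem_union_left _ (Finset.mem_union_left _ (Finset.mem_image_of_mem _ hs))
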